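/- arXiv:0901.4505 — 6 statements merged into one kernel-verified Lean document; each statement's English description precedes it below -/
import Mathlib

section
/- Let Δ be a crystallographic root system in a finite-dimensional real inner product space V, let h : V → ℝ be a linear functional with h(α) ∈ {−2, −1, 0, 1, 2} for every α ∈ Δ, and let Δ⁺ ⊆ Δ be a positive system (Δ is the disjoint union of Δ⁺ and −Δ⁺) such that every α ∈ Δ with h(α) > 0 lies in Δ⁺. Put ρ_g = (1/2)·Σ_{α ∈ Δ⁺} α and ρ_k = (1/2)·Σ_{α ∈ Δ⁺, h(α) ≠ 1} α. Then for every γ ∈ V and every α ∈ Δ with h(α) = 2 one has ⟨γ + ρ_k, α⟩ ≤ ⟨γ + ρ_g, α⟩. Consequently, if ⟨γ + ρ_g, α⟩ < 0 for all α ∈ Δ with h(α) ∈ {1, 2}, then ⟨γ + ρ_k, α⟩ < 0 for all α ∈ Δ with h(α) = 2. -/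
/-!
The difference `ρg - ρk` is half the sum of the positive roots with `h = 1`, so it suffices that
`⟪β, α⟫ ≥ 0` whenever `h β = 1` and `h α = 2`. If this pairing were negative, the Cartan integer
`n` of `(β, α)` would be at most `-1`, and the reflected root `β - n • α` would have grading
`1 - 2 * n ≥ 3`, outside the allowed values.
-/

open RealInnerProductSpace

/-- Lemma 5.8: the `G₀`-negativity condition implies the `K₀`-negativity condition.
Here `Δ` is a crystallographic root system graded by a functional `h` with values in
`{-2,-1,0,1,2}`, `Δplus` is a positive system containing all roots with `h > 0`,
`ρg` is half the sum of positive roots and `ρk` is half the sum of the positive roots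
with `h ≠ 1` (the compact ones). -/
theorem stmt_2
    {V : Type*} [NormedAddCommGroup V] [InnerProductSpace ℝ V] [FiniteDimensional ℝ V]
    (Δ Δplus : Finset V)
    (hne : (0 : V) ∉ Δ)
    (hcrys : ∀ α ∈ Δ, ∀ β ∈ Δ, ∃ n : ℤ,
      2 * ⟪β, α⟫ / ⟪α, α⟫ = (n : ℝ) ∧
      β - (2 * ⟪β, α⟫ / ⟪α, α⟫) • α ∈ Δ)
    (h : V →ₗ[ℝ] ℝ)
    (hval : ∀ α ∈ Δ, h α ∈ ({-2, -1, 0, 1, 2} : Set ℝ))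
    -- `Δ` is the disjoint union of `Δplus` and `-Δplus`:
    (hunion : ∀ α : V, α ∈ Δ ↔ (α ∈ Δplus ∨ -α ∈ Δplus))
    (hdisj : ∀ α : V, ¬ (α ∈ Δplus ∧ -α ∈ Δplus))
    -- every root with positive grading is positive:
    (hposh : ∀ α ∈ Δ, 0 < h α → α ∈ Δplus)
    (ρg ρk : V)
    (hρg : ρg = (2 : ℝ)⁻¹ • ∑ α ∈ Δplus, α)
    (hρk : ρk = (2 : ℝ)⁻¹ • ∑ α ∈ Δplus.filter (fun α => h α ≠ 1), α) :
    (∀ γ : V, ∀ α ∈ Δ, h α = 2 → ⟪γ + ρk, α⟫ ≤ ⟪γ + ρg, α⟫) ∧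
    (∀ γ : V, (∀ α ∈ Δ, (h α = 1 ∨ h α = 2) → ⟪γ + ρg, α⟫ < 0) →
      ∀ α ∈ Δ, h α = 2 → ⟪γ + ρk, α⟫ < 0) := by
  have key : ∀ α ∈ Δ, h α = 2 → ∀ β ∈ Δ, h β = 1 → 0 ≤ ⟪β, α⟫ := by
    intro α hα h2 β hβ h1
    by_contra! hneg
    obtain ⟨n, hn, hmem⟩ := hcrys α hα β hβ
    have hα0 : α ≠ 0 := fun h0 => hne (h0 ▸ hα)
    have hlt : (n : ℝ) < 0 := by
      rw [← hn]
      exact div_neg_of_neg_of_pos (by linarith) (real_inner_self_pos.mpr hα0)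
    have hn1 : (n : ℝ) ≤ -1 := by
      have : n < 0 := by exact_mod_cast hlt
      exact_mod_cast (show n ≤ -1 by lia)
    have hv := hval _ hmem
    rw [hn] at hv
    simp only [map_sub, map_smul, h1, h2, smul_eq_mul, Set.mem_insert_iff,
      Set.mem_singleton_iff] at hv
    rcases hv with hv | hv | hv | hv | hv <;> linarith
  have main : ∀ γ : V, ∀ α ∈ Δ, h α = 2 → ⟪γ + ρk, α⟫ ≤ ⟪γ + ρg, α⟫ := by
    intro γ α hα h2
    have hsum := Finset.sum_filter_add_sum_filter_not Δplus (fun α => h α ≠ 1) (fun α => α)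
    have hnn : 0 ≤ ⟪∑ β ∈ Δplus.filter (fun α => ¬ h α ≠ 1), β, α⟫ := by
      rw [sum_inner]
      refine Finset.sum_nonneg fun β hβ => ?_
      rw [Finset.mem_filter, not_not] at hβ
      exact key α hα h2 β ((hunion β).2 (Or.inl hβ.1)) hβ.2
    rw [hρg, hρk, ← hsum]
    simp only [inner_add_left, real_inner_smul_left]
    linarith
  exact ⟨main, fun γ hγ α hα h2 => (main γ α hα h2).trans_lt (hγ α hα (Or.inr h2))⟩
end

section
/- Let p and r be natural numbers with r < p. Then every function f from p×r complex matrices to ℂ that is given by evaluating a fixed multivariate polynomial in the p·r matrix entries and that satisfies f(a·z·ᵗb) = f(z) for every p×p complex matrix a with det a = 1, every r×r complex matrix b with b·ᵗb = I and det b = 1, and every p×r complex matrix z, is constant. -/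
/-!
Since `r < p`, the columns of `z` do not span `ℂ^p`: some `v ≠ 0` satisfies `ᵗv z = 0`. Choose `w`
with `ᵗv w = 1`. For `t ≠ 0` the matrix `t • (1 + (t⁻ᵖ - 1) w ᵗv)` has determinant `1` and sends `z`
to `t z`, so the special linear group alone gives `f (t z) = f z`. Letting `t → 0`, continuity of
the polynomial `f` yields `f z = f 0`.
-/

open Matrix

/-- Left multiplication by `SL(p, ℂ)` realises every nonzero scaling of a matrix whose number of
columns is smaller than `p`. -/
theorem exists_det_one_mul_eq_smul {p r : ℕ} (hpr : r < p) (z : Matrix (Fin p) (Fin r) ℂ)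
    {t : ℂ} (ht : t ≠ 0) :
    ∃ a : Matrix (Fin p) (Fin p) ℂ, a.det = 1 ∧ a * z = t • z := by
  obtain ⟨v, hvz, hv⟩ : ∃ v : Fin p → ℂ, v ᵥ* z = 0 ∧ v ≠ 0 := by
    have h : LinearMap.ker z.vecMulLinear ≠ ⊥ :=
      LinearMap.ker_ne_bot_of_finrank_lt (by simpa using hpr)
    obtain ⟨v, hv, hv0⟩ := (Submodule.ne_bot_iff _).1 h
    exact ⟨v, by simpa using hv, hv0⟩
  obtain ⟨i, hi⟩ := Function.ne_iff.1 hv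
  replace hi : v i ≠ 0 := hi
  set c : ℂ := (t ^ p)⁻¹ - 1 with hc
  -- `Pi.single i (v i)⁻¹` is the vector `w` pairing to `1` with `v`, here scaled by `c`.
  refine ⟨t • (1 + vecMulVec (Pi.single i (c * (v i)⁻¹)) v), ?_, ?_⟩
  · rw [det_smul, Fintype.card_fin, vecMulVec_eq Unit, det_one_add_replicateCol_mul_replicateRow,
      dotProduct_single]
    have : t ^ p ≠ 0 := pow_ne_zero _ ht
    rw [hc]
    field_simp
    ring
  · rw [Matrix.smul_mul, Matrix.add_mul, Matrix.one_mul, vecMulVec_mul, hvz]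
    ext j k
    simp [vecMulVec_apply]

/-- For `r < p`, every polynomial function `f` on `p × r` complex matrices that is
invariant under `z ↦ a z bᵀ` for all `a ∈ SL(p,ℂ)` and `b ∈ SO(r,ℂ)` is constant:
the pair `(GL(p,ℂ) × SO(r,ℂ), ℂ^{p×r})` has no relative invariant when `p > r`. -/
theorem stmt_5 (p r : ℕ) (hpr : r < p)
    (f : Matrix (Fin p) (Fin r) ℂ → ℂ)
    (hpoly : ∃ P : MvPolynomial (Fin p × Fin r) ℂ,
      ∀ z : Matrix (Fin p) (Fin r) ℂ, f z = MvPolynomial.eval (fun ij => z ij.1 ij.2) P)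
    (hinv : ∀ a : Matrix (Fin p) (Fin p) ℂ, a.det = 1 →
      ∀ b : Matrix (Fin r) (Fin r) ℂ, b * bᵀ = 1 → b.det = 1 →
      ∀ z : Matrix (Fin p) (Fin r) ℂ, f (a * z * bᵀ) = f z) :
    ∀ z w : Matrix (Fin p) (Fin r) ℂ, f z = f w := by
  suffices h : ∀ z, f z = f 0 from fun z w => (h z).trans (h w).symm
  intro z
  obtain ⟨P, hP⟩ := hpoly
  have hconst : ∀ t : ℂ, t ≠ 0 → f (t • z) = f z := by
    intro t ht
    obtain ⟨a, ha, haz⟩ := exists_det_one_mul_eq_smul hpr z ht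
    simpa [haz] using hinv a ha 1 (by simp) (by simp) z
  have hcont : Continuous fun t : ℂ => f (t • z) := by
    simp only [hP]
    refine (MvPolynomial.continuous_eval P).comp ?_
    simp only [Matrix.smul_apply]
    fun_prop
  have h0 : Filter.Tendsto (fun t : ℂ => f (t • z)) (nhdsWithin 0 {0}ᶜ) (nhds (f 0)) := by
    simpa using (hcont.tendsto 0).mono_left nhdsWithin_le_nhds
  refine tendsto_nhds_unique (tendsto_const_nhds.congr' ?_) h0
  filter_upwards [self_mem_nhdsWithin] with t ht
  exact (hconst t ht).symm
end

section
/- Let p and r be natural numbers with r < p, and let m be the p×r complex matrix whose top r×r block is the identity and whose remaining p−r rows are zero. Then the set {a·m·ᵗb : a a p×p complex matrix with det a = 1, b an r×r complex matrix with b·ᵗb = I and det b = 1} is exactly the set of p×r complex matrices of rank r. -/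
/-!
Multiplying by invertible matrices preserves the rank, and `m` has rank `r` because `mᵀ m = 1`;
so the orbit consists of matrices of rank `r`. Conversely the orthogonal factor can be taken to
be `1`: if `x` has rank `r`, then `x` and `m` both define injective maps `ℂ^r → ℂ^p`, and the
isomorphism between their ranges extends to an automorphism `g` of `ℂ^p` with `g m = x`
(`exists_det_ne_zero_mul_eq`). As `r < p`, row `r` of `m` (counting from `0`) vanishes, so rescaling
column `r` of `g` makes its determinant `1` without changing `g m`.
-/

open Matrix

lemma injective_mulVecLin_of_rank_eq {p r : ℕ} {x : Matrix (Fin p) (Fin r) ℂ}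
    (hx : x.rank = r) : Function.Injective x.mulVecLin := by
  have h := x.mulVecLin.finrank_range_add_finrank_ker
  change x.rank + _ = _ at h
  rw [hx, Module.finrank_fin_fun] at h
  rw [← LinearMap.ker_eq_bot, ← Submodule.finrank_eq_zero (R := ℂ)]
  omega

/-- Two matrices of full column rank differ by an invertible matrix on the left. -/
lemma exists_det_ne_zero_mul_eq {p r : ℕ} {m x : Matrix (Fin p) (Fin r) ℂ}
    (hm : m.rank = r) (hx : x.rank = r) :
    ∃ g : Matrix (Fin p) (Fin p) ℂ, g.det ≠ 0 ∧ g * m = x := by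
  let em := LinearEquiv.ofInjective m.mulVecLin (injective_mulVecLin_of_rank_eq hm)
  let ex := LinearEquiv.ofInjective x.mulVecLin (injective_mulVecLin_of_rank_eq hx)
  obtain ⟨g, hg⟩ := Submodule.exists_linearEquiv_restrict_eq (em.symm.trans ex)
  refine ⟨LinearMap.toMatrix' (g : (Fin p → ℂ) →ₗ[ℂ] (Fin p → ℂ)), ?_, ?_⟩
  · rw [LinearMap.det_toMatrix']
    exact g.isUnit_det'.ne_zero
  · apply Matrix.ext_of_mulVec_single
    intro j
    have h := hg (em (Pi.single j 1))
    rw [← Matrix.mulVec_mulVec, LinearMap.toMatrix'_mulVec]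
    simpa [em, ex] using h.symm

/-- For `r < p`, the `SL(p,ℂ) × SO(r,ℂ)`-orbit of the matrix `m = (I_r ; 0)` (identity
on top, zeros below) under `z ↦ a z bᵀ` is exactly the set of `p × r` complex matrices
of rank `r`. -/
theorem stmt_6 (p r : ℕ) (hpr : r < p)
    (m : Matrix (Fin p) (Fin r) ℂ)
    (hm : ∀ i j, m i j = if (i : ℕ) = (j : ℕ) then 1 else 0) :
    {x : Matrix (Fin p) (Fin r) ℂ |
        ∃ a : Matrix (Fin p) (Fin p) ℂ, ∃ b : Matrix (Fin r) (Fin r) ℂ,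
          a.det = 1 ∧ b * bᵀ = 1 ∧ b.det = 1 ∧ x = a * m * bᵀ} =
      {x : Matrix (Fin p) (Fin r) ℂ | x.rank = r} := by
  have hmm : mᵀ * m = 1 := by
    ext i j
    rw [Matrix.mul_apply, Finset.sum_eq_single (⟨i, by omega⟩ : Fin p)]
    · simp [hm, Matrix.one_apply, Fin.ext_iff]
    · intro k _ hk
      have : (k : ℕ) ≠ i := fun h => hk (Fin.ext h)
      simp [hm, this]
    · simp
  have hrank : m.rank = r := by
    have h := Matrix.rank_mul_le_right mᵀ m
    rw [hmm, Matrix.rank_one, Fintype.card_fin] at h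
    exact le_antisymm m.rank_le_width h
  ext x
  constructor
  · rintro ⟨a, b, ha, -, hb, rfl⟩
    change (a * m * bᵀ).rank = r
    rw [Matrix.rank_mul_eq_left_of_isUnit_det _ _ (by simp [hb]),
      Matrix.rank_mul_eq_right_of_isUnit_det _ _ (by simp [ha]), hrank]
  · intro hx
    obtain ⟨g, hg, hgm⟩ := exists_det_ne_zero_mul_eq hrank hx
    let k : Fin p := ⟨r, hpr⟩
    let d : Fin p → ℂ := Function.update 1 k g.det⁻¹
    have hd : Matrix.diagonal d * m = m := by
      ext i j
      rw [Matrix.diagonal_mul]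
      by_cases hi : i = k
      · have : r ≠ (j : ℕ) := j.isLt.ne'
        simp [hm, hi, k, this]
      · simp [d, hi]
    refine ⟨g * Matrix.diagonal d, 1, ?_, by simp, by simp, ?_⟩
    · rw [Matrix.det_mul, Matrix.det_diagonal, Finset.prod_update_of_mem (Finset.mem_univ k)]
      simp [hg]
    · rw [Matrix.transpose_one, Matrix.mul_one, Matrix.mul_assoc, hd, hgm]
end

section
/- For all natural numbers p and q, there exists a p×2q complex matrix z with det(z·J·ᵗz) ≠ 0 if and only if p is even and p ≤ 2q, where J is the 2q×2q block matrix (0, I_q; −I_q, 0). (The matrix z·J·ᵗz is always antisymmetric, so for odd p its determinant vanishes identically; for p > 2q it vanishes for rank reasons.) -/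
/-!
If `z * J * zᵀ` has nonzero determinant, then `p ≤ 2 * q` by comparing ranks, and `p` is even
because a skew-symmetric matrix `A` satisfies `det A = det Aᵀ = (-1) ^ p * det A`.

Conversely, let `p = 2k` with `k ≤ q`, and choose for the rows of `z` the standard basis vectors
`e₁, …, e_k, e_{q+1}, …, e_{q+k}`, which span a symplectic subspace. Then `z * J * zᵀ` is the
standard symplectic matrix of size `2k`, whose square is `-1`, so its determinant does not vanish.
-/

open Matrix

/-- A skew-symmetric complex matrix of odd size is singular. -/
lemma even_of_transpose_eq_neg_of_det_ne_zero {p : ℕ} (A : Matrix (Fin p) (Fin p) ℂ)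
    (hA : Aᵀ = -A) (hdet : A.det ≠ 0) : Even p := by
  by_contra h
  have h1 := A.det_transpose
  rw [hA, det_neg, Fintype.card_fin, (Nat.not_even_iff_odd.mp h).neg_one_pow, neg_one_mul] at h1
  exact hdet (neg_eq_self.mp h1)

/-- The standard symplectic matrix, given by its entries, is nonsingular since its square
is `-1`. -/
lemma det_ne_zero_of_standard_entries {k : ℕ} (M : Matrix (Fin (k + k)) (Fin (k + k)) ℂ)
    (hM : ∀ i j, M i j = if (i : ℕ) + k = (j : ℕ) then 1
      else if (j : ℕ) + k = (i : ℕ) then -1 else 0) : M.det ≠ 0 := by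
  have hsq : M * -M = 1 := by
    ext i j
    rw [Matrix.mul_apply, Matrix.one_apply]
    have hi := i.isLt
    have hj := j.isLt
    -- Row `i` of `M` has a single nonzero entry, in column `i + k` or `i - k`.
    by_cases hik : (i : ℕ) < k
    · rw [Finset.sum_eq_single ⟨i + k, by omega⟩ _ (by simp)]
      · simp only [Matrix.neg_apply, hM, Fin.ext_iff]
        grind
      · intro l _ hl
        have : (l : ℕ) ≠ i + k := fun h => hl (Fin.ext h)
        simp only [Matrix.neg_apply, hM]
        grind
    · rw [Finset.sum_eq_single ⟨i - k, by omega⟩ _ (by simp)]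
      · simp only [Matrix.neg_apply, hM, Fin.ext_iff]
        grind
      · intro l _ hl
        have : (l : ℕ) ≠ i - k := fun h => hl (Fin.ext h)
        simp only [Matrix.neg_apply, hM]
        grind
  exact det_ne_zero_of_right_inverse hsq

/-- There exists a `p × 2q` complex matrix `z` with `det(z J zᵀ) ≠ 0`, where
`J = (0, I_q; -I_q, 0)`, if and only if `p` is even and `p ≤ 2q`. -/
theorem stmt_8 (p q : ℕ)
    (J : Matrix (Fin (2 * q)) (Fin (2 * q)) ℂ)
    (hJ : ∀ i j, J i j = if (i : ℕ) + q = (j : ℕ) then 1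
      else if (j : ℕ) + q = (i : ℕ) then -1 else 0) :
    (∃ z : Matrix (Fin p) (Fin (2 * q)) ℂ, (z * J * zᵀ).det ≠ 0) ↔
      Even p ∧ p ≤ 2 * q := by
  constructor
  · rintro ⟨z, hz⟩
    refine ⟨even_of_transpose_eq_neg_of_det_ne_zero _ ?_ hz, ?_⟩
    · have hJt : Jᵀ = -J := by
        ext i j
        have hi := i.isLt
        have hj := j.isLt
        simp only [Matrix.transpose_apply, Matrix.neg_apply, hJ]
        grind
      rw [transpose_mul, transpose_mul, transpose_transpose, hJt, Matrix.neg_mul,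
        Matrix.mul_neg, Matrix.mul_assoc]
    · have hr := rank_of_isUnit _ ((isUnit_iff_isUnit_det _).mpr hz.isUnit)
      rw [Fintype.card_fin, Matrix.mul_assoc] at hr
      calc p = (z * (J * zᵀ)).rank := hr.symm
        _ ≤ z.rank := rank_mul_le_left _ _
        _ ≤ 2 * q := z.rank_le_width
  · rintro ⟨⟨k, rfl⟩, hk⟩
    let f : Fin (k + k) → Fin (2 * q) := fun i =>
      if h : (i : ℕ) < k then ⟨i, by omega⟩ else ⟨q + (i - k), by omega⟩
    have hf : ∀ i, (f i : ℕ) = if (i : ℕ) < k then (i : ℕ) else q + (i - k) := by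
      intro i
      simp only [f]
      split_ifs <;> rfl
    refine ⟨(1 : Matrix (Fin (2 * q)) (Fin (2 * q)) ℂ).submatrix f id,
      det_ne_zero_of_standard_entries _ fun i j => ?_⟩
    have hsub : (1 : Matrix (Fin (2 * q)) (Fin (2 * q)) ℂ).submatrix f id * J *
        ((1 : Matrix (Fin (2 * q)) (Fin (2 * q)) ℂ).submatrix f id)ᵀ = J.submatrix f f := by
      ext a b
      simp [Matrix.mul_apply, Matrix.one_apply]
    rw [hsub, submatrix_apply, hJ, hf, hf]
    have hi := i.isLt
    have hj := j.isLt
    grind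
end

section
/- Let p and q be natural numbers with p > 2q or p odd. Then every function f from p×2q complex matrices to ℂ that is given by evaluating a fixed multivariate polynomial in the matrix entries and that satisfies f(a·z·b) = f(z) for every p×p complex matrix a with det a = 1, every 2q×2q complex matrix b with b·J·ᵗb = J, and every p×2q complex matrix z, is constant, where J is the 2q×2q block matrix (0, I_q; −I_q, 0). -/
/-!
Every `f z` equals `f 0`, because `0` lies in the closure of the orbit of `z`.

Write `ω x y = x J yᵗ`. The matrix `z J zᵗ` is singular: either `z` has a nonzero left kernel
(`2q < p`), or `z J zᵗ` is skew-symmetric of odd size. So there is a nonzero `v` with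
`v z J zᵗ = 0`; after scaling, `v` is the `k`-th row of a matrix `g` of determinant `1`
(`exists_radical_vector`). The row `r = v z` of `R = g z` is then `ω`-orthogonal to all rows of `R`.
The diagonal matrix with entries `t`, except for `t^{-(p-1)}` at `k`, has determinant `1`; it
shrinks all rows but `r` as `t → 0`. If `r ≠ 0`, choose `s` with `ω r s = 1`; the hyperbolic
symplectic map `r ↦ tᵖ r`, `s ↦ t⁻ᵖ s`, identity on `{r, s}^⊥`, repairs the row `r`, and it keeps
the other rows polynomial in `t` since they have no `s`-component (`hyp_symplectic`). The resulting
curve `W t` in the orbit of `z` is polynomial in `t` with `W 0 = 0`, so continuity of `f` gives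
`f z = f 0` (`eq_zero_of_contraction`).
-/

open Matrix

/-- The matrix `J` in coordinates is skew-symmetric. -/
lemma J_skew {q : ℕ} {J : Matrix (Fin (2 * q)) (Fin (2 * q)) ℂ}
    (hJ : ∀ i j, J i j = if (i : ℕ) + q = (j : ℕ) then 1
      else if (j : ℕ) + q = (i : ℕ) then -1 else 0) : Jᵀ = -J := by
  ext i j
  have hi := i.2
  rw [transpose_apply, Matrix.neg_apply, hJ, hJ]
  split_ifs <;> first | omega | simp

/-- Nondegeneracy of the symplectic form. -/
lemma J_nondeg {q : ℕ} {J : Matrix (Fin (2 * q)) (Fin (2 * q)) ℂ}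
    (hJ : ∀ i j, J i j = if (i : ℕ) + q = (j : ℕ) then 1
      else if (j : ℕ) + q = (i : ℕ) then -1 else 0)
    {r : Fin (2 * q) → ℂ} (hr : r ≠ 0) : ∃ s, (r ᵥ* J) ⬝ᵥ s = 1 := by
  obtain ⟨j, hj⟩ : ∃ j, (r ᵥ* J) j ≠ 0 := by
    obtain ⟨i, hi⟩ := Function.ne_iff.mp hr
    have hi2 := i.2
    -- The column of `J` paired with the index `i` has its only nonzero entry at `i`.
    rcases lt_or_ge (i : ℕ) q with h | h
    · refine ⟨⟨i + q, by omega⟩, ?_⟩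
      rw [vecMul, dotProduct, Finset.sum_eq_single i]
      · simpa [hJ] using hi
      · intro b _ hb
        have hb' : (b : ℕ) ≠ i := fun h => hb (Fin.ext h)
        have := b.2
        rw [hJ, if_neg (by simp; omega), if_neg (by simp; omega), mul_zero]
      · simp
    · refine ⟨⟨i - q, by omega⟩, ?_⟩
      rw [vecMul, dotProduct, Finset.sum_eq_single i]
      · rw [hJ, if_neg (by simp; omega), if_pos (by simp; omega)]
        simpa using hi
      · intro b _ hb
        have hb' : (b : ℕ) ≠ i := fun h => hb (Fin.ext h)
        have := b.2
        rw [hJ, if_neg (by simp; omega), if_neg (by simp; omega), mul_zero]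
      · simp
  refine ⟨Pi.single j ((r ᵥ* J) j)⁻¹, ?_⟩
  rw [dotProduct_single, mul_inv_cancel₀ hj]

/-- For a hyperbolic pair `r, s`, the matrix (acting on row vectors from the right) of the map that
multiplies `r` by `1 + α` and `s` by `1 + β` and fixes the symplectic complement of `r, s`. -/
def hyp {n : ℕ} (J : Matrix (Fin n) (Fin n) ℂ) (r s : Fin n → ℂ) (α β : ℂ) :
    Matrix (Fin n) (Fin n) ℂ :=
  1 + α • vecMulVec (J *ᵥ s) r - β • vecMulVec (J *ᵥ r) s

lemma vecMul_hyp {n : ℕ} (J : Matrix (Fin n) (Fin n) ℂ) (r s x : Fin n → ℂ) (α β : ℂ) :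
    x ᵥ* hyp J r s α β =
      x + (α * ((x ᵥ* J) ⬝ᵥ s)) • r - (β * ((x ᵥ* J) ⬝ᵥ r)) • s := by
  simp only [hyp, vecMul_add, vecMul_sub, vecMul_one, vecMul_smul, vecMul_vecMulVec,
    dotProduct_mulVec, smul_smul]

lemma form_swap {n : ℕ} {J : Matrix (Fin n) (Fin n) ℂ} (hJ : Jᵀ = -J) (x y : Fin n → ℂ) :
    (x ᵥ* J) ⬝ᵥ y = -((y ᵥ* J) ⬝ᵥ x) := by
  rw [← dotProduct_mulVec, dotProduct_comm, ← vecMul_transpose, hJ, vecMul_neg, neg_dotProduct]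

lemma hyp_symplectic {n : ℕ} {J : Matrix (Fin n) (Fin n) ℂ} (hJ : Jᵀ = -J) {r s : Fin n → ℂ}
    (hrs : (r ᵥ* J) ⬝ᵥ s = 1) {α β : ℂ} (hab : (1 + α) * (1 + β) = 1) :
    hyp J r s α β * J * (hyp J r s α β)ᵀ = J := by
  have self (x : Fin n → ℂ) : (x ᵥ* J) ⬝ᵥ x = 0 := by
    have := form_swap hJ x x
    linear_combination this / 2
  -- The matrix identity is tested on pairs of row vectors.
  have key (x y : Fin n → ℂ) :
      ((x ᵥ* hyp J r s α β) ᵥ* J) ⬝ᵥ (y ᵥ* hyp J r s α β) = (x ᵥ* J) ⬝ᵥ y := by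
    simp only [vecMul_hyp, add_vecMul, sub_vecMul, smul_vecMul, add_dotProduct, sub_dotProduct,
      smul_dotProduct, dotProduct_add, dotProduct_sub, dotProduct_smul, smul_eq_mul, self, hrs,
      form_swap hJ s r, form_swap hJ r y, form_swap hJ s y]
    linear_combination (-((x ᵥ* J) ⬝ᵥ s) * ((y ᵥ* J) ⬝ᵥ r)
      + ((x ᵥ* J) ⬝ᵥ r) * ((y ᵥ* J) ⬝ᵥ s)) * hab
  ext i j
  have h := key (Pi.single i 1) (Pi.single j 1)
  rw [← mulVec_transpose (hyp J r s α β) (Pi.single j 1), dotProduct_mulVec, vecMul_vecMul,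
    vecMul_vecMul] at h
  simpa [dotProduct_single, Matrix.mul_assoc] using h

/-- A left kernel vector of a singular matrix, scaled to have a coordinate `1`, is a row of a
matrix of determinant one. This is applied to `S = z J zᵗ`. -/
lemma exists_radical_vector {p : ℕ} {S : Matrix (Fin p) (Fin p) ℂ} (hS : S.det = 0) :
    ∃ (k : Fin p) (g : Matrix (Fin p) (Fin p) ℂ), g.det = 1 ∧ g k ᵥ* S = 0 := by
  obtain ⟨v, hv, hvS⟩ := exists_vecMul_eq_zero_iff.mpr hS
  obtain ⟨k, hk⟩ := Function.ne_iff.mp hv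
  have hk : v k ≠ 0 := hk
  refine ⟨k, updateRow 1 k ((v k)⁻¹ • v), ?_, ?_⟩
  · rw [← det_transpose, ← updateCol_transpose, transpose_one, ← cramer_apply, cramer_one]
    simp [hk]
  · rw [updateRow_self, smul_vecMul, hvS, smul_zero]

lemma det_form_eq_zero {p q : ℕ} (hpq : 2 * q < p ∨ Odd p)
    {J : Matrix (Fin (2 * q)) (Fin (2 * q)) ℂ} (hJ : Jᵀ = -J)
    (z : Matrix (Fin p) (Fin (2 * q)) ℂ) : (z * J * zᵀ).det = 0 := by
  rcases hpq with h | h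
  · have hker : LinearMap.ker z.vecMulLinear ≠ ⊥ :=
      LinearMap.ker_ne_bot_of_finrank_lt (by simpa using h)
    obtain ⟨v, hv, hv0⟩ := Submodule.exists_mem_ne_zero_of_ne_bot hker
    refine exists_vecMul_eq_zero_iff.mp ⟨v, hv0, ?_⟩
    have hv : v ᵥ* z = 0 := hv
    rw [← vecMul_vecMul, ← vecMul_vecMul, hv, zero_vecMul, zero_vecMul]
  · have hT : (z * J * zᵀ)ᵀ = -(z * J * zᵀ) := by
      simp [transpose_mul, hJ, Matrix.mul_assoc]
    have := congrArg det hT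
    rw [det_transpose, det_neg, Fintype.card_fin, h.neg_one_pow] at this
    linear_combination this / 2

/-- The contraction argument: `g z` has a row `r = g k z` which the symplectic matrices `b t`
multiply by `tᵖ`, while they only change the other rows by multiples of `r`. -/
lemma eq_zero_of_contraction {p n : ℕ} {J : Matrix (Fin n) (Fin n) ℂ}
    {f : Matrix (Fin p) (Fin n) ℂ → ℂ} (hf : Continuous f)
    (hinv : ∀ a : Matrix (Fin p) (Fin p) ℂ, a.det = 1 →
      ∀ b : Matrix (Fin n) (Fin n) ℂ, b * J * bᵀ = J →
      ∀ z : Matrix (Fin p) (Fin n) ℂ, f (a * z * b) = f z)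
    (z : Matrix (Fin p) (Fin n) ℂ) (k : Fin p) {g : Matrix (Fin p) (Fin p) ℂ} (hg : g.det = 1)
    (b : ℂ → Matrix (Fin n) (Fin n) ℂ) (hb : ∀ t ≠ 0, b t * J * (b t)ᵀ = J)
    (c : Fin p → ℂ)
    (hrow : ∀ t ≠ 0, ∀ i, (g * z) i ᵥ* b t = (g * z) i + ((t ^ p - 1) * c i) • (g * z) k)
    (hk : ∀ t ≠ 0, (g * z) k ᵥ* b t = t ^ p • (g * z) k) :
    f z = f 0 := by
  let W : ℂ → Matrix (Fin p) (Fin n) ℂ := fun t => of fun i j =>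
    t * if i = k then (g * z) k j else (g * z) i j + (t ^ p - 1) * c i * (g * z) k j
  have hW : Continuous W := by
    refine continuous_matrix fun i j => ?_
    by_cases h : i = k <;> simp only [W, of_apply, h, if_true, if_false] <;> fun_prop
  have hp : p - 1 + 1 = p := Nat.sub_add_cancel (Nat.one_le_iff_ne_zero.mpr fun h => by
    subst h; exact k.elim0)
  have hconst : ∀ t ∈ ({0}ᶜ : Set ℂ), f (W t) = f z := by
    intro t ht
    have ht : t ≠ 0 := ht
    let d : Fin p → ℂ := Function.update (fun _ => t) k (t ^ (p - 1))⁻¹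
    have hd : (diagonal d * g).det = 1 := by
      rw [det_mul, hg, mul_one, det_diagonal, Finset.prod_update_of_mem (Finset.mem_univ k)]
      rw [Finset.prod_const, Finset.card_sdiff_of_subset (by simp)]
      simp [ht]
    have hWt : diagonal d * g * z * b t = W t := by
      ext i j
      have e : (diagonal d * g * z * b t) i j = d i * ((g * z) i ᵥ* b t) j := by
        rw [Matrix.mul_assoc, Matrix.mul_assoc, diagonal_mul, ← Matrix.mul_assoc,
          mul_apply_eq_vecMul]
      rw [e]
      by_cases h : i = k
      · subst h
        rw [hk t ht]
        simp only [W, d, of_apply, if_true, Function.update_self, Pi.smul_apply, smul_eq_mul]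
        have hpow : t ^ p = t ^ (p - 1) * t := by rw [← pow_succ, hp]
        rw [hpow]
        field_simp
      · rw [hrow t ht]
        simp [W, d, h]
    rw [← hWt, hinv _ hd _ (hb t ht)]
  have hall : (fun t => f (W t)) = fun _ => f z :=
    Continuous.ext_on (dense_compl_singleton 0) (hf.comp hW) continuous_const hconst
  have hW0 : W 0 = 0 := by ext; simp [W]
  rw [← hW0]
  exact (congrFun hall 0).symm

/-- For `p > 2q` or `p` odd, every polynomial function `f` on `p × 2q` complex matrices
that is invariant under `z ↦ a z b` for all `a ∈ SL(p,ℂ)` and `b ∈ Sp(q,ℂ)`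
(where `J = (0, I_q; -I_q, 0)`) is constant: the pair
`(GL(p,ℂ) × Sp(q,ℂ), ℂ^{p×2q})` has no relative invariant in that range. -/
theorem stmt_9 (p q : ℕ) (hpq : 2 * q < p ∨ Odd p)
    (J : Matrix (Fin (2 * q)) (Fin (2 * q)) ℂ)
    (hJ : ∀ i j, J i j = if (i : ℕ) + q = (j : ℕ) then 1
      else if (j : ℕ) + q = (i : ℕ) then -1 else 0)
    (f : Matrix (Fin p) (Fin (2 * q)) ℂ → ℂ)
    (hpoly : ∃ P : MvPolynomial (Fin p × Fin (2 * q)) ℂ,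
      ∀ z : Matrix (Fin p) (Fin (2 * q)) ℂ,
        f z = MvPolynomial.eval (fun ij => z ij.1 ij.2) P)
    (hinv : ∀ a : Matrix (Fin p) (Fin p) ℂ, a.det = 1 →
      ∀ b : Matrix (Fin (2 * q)) (Fin (2 * q)) ℂ, b * J * bᵀ = J →
      ∀ z : Matrix (Fin p) (Fin (2 * q)) ℂ, f (a * z * b) = f z) :
    ∀ z w : Matrix (Fin p) (Fin (2 * q)) ℂ, f z = f w := by
  have hf : Continuous f := by
    obtain ⟨P, hP⟩ := hpoly
    rw [funext hP]
    exact (MvPolynomial.continuous_eval P).comp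
      (continuous_pi fun ij => continuous_id.matrix_elem ij.1 ij.2)
  have hskew := J_skew hJ
  suffices h : ∀ z, f z = f 0 from fun z w => (h z).trans (h w).symm
  intro z
  obtain ⟨k, g, hg, hgk⟩ := exists_radical_vector (det_form_eq_zero hpq hskew z)
  have hperp (i : Fin p) : ((g * z) i ᵥ* J) ⬝ᵥ (g * z) k = 0 := by
    rw [form_swap hskew, neg_eq_zero]
    have h1 : (g * z) k = g k ᵥ* z := rfl
    have h2 : (g * z) i = zᵀ *ᵥ g i := (mulVec_transpose z (g i)).symm
    rw [h1, h2, dotProduct_mulVec, vecMul_vecMul, vecMul_vecMul,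
      ← Matrix.mul_assoc, hgk, zero_dotProduct]
  by_cases hr : (g * z) k = 0
  · exact eq_zero_of_contraction hf hinv z k hg (fun _ => 1) (by simp) 0
      (by simp) (by simp [hr])
  · obtain ⟨s, hs⟩ := J_nondeg hJ hr
    refine eq_zero_of_contraction hf hinv z k hg
      (fun t => hyp J ((g * z) k) s (t ^ p - 1) ((t ^ p)⁻¹ - 1))
      (fun t ht => hyp_symplectic hskew hs ?_)
      (fun i => ((g * z) i ᵥ* J) ⬝ᵥ s) (fun t _ i => ?_) (fun t _ => ?_)
    · field_simp
      ring
    · rw [vecMul_hyp, hperp, mul_zero, zero_smul, sub_zero]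
    · rw [vecMul_hyp, hperp, hs, mul_zero, zero_smul, sub_zero, mul_one, sub_smul, one_smul,
        add_sub_cancel]
end

section
/- Let p and q be natural numbers with p > 2q, and let m be the p×2q complex matrix whose top 2q×2q block is the identity and whose remaining p−2q rows are zero. Then the set {a·m·b : a a p×p complex matrix with det a = 1, b a 2q×2q complex matrix with b·J·ᵗb = J} is exactly the set of p×2q complex matrices of rank 2q, where J is the 2q×2q block matrix (0, I_q; −I_q, 0). -/
/-!
For `⊆`: with `m = (I ; 0)` one has `mᵀ * m = 1`, and both `a` and `b` are invertible (for `b`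
because `J` has inverse `-J`), so multiplication by them preserves the rank `2q` of `m`.

For `⊇`, the symplectic factor can be taken to be `1`. A rank-`2q` matrix `x` has the same kernel
(zero) as `m`, so the isomorphism `range m → range x`, `m v ↦ x v`, extends to an automorphism `A`
of `ℂ^p` (`exists_isUnit_mul_eq`). Since `p > 2q`, row `2q` of `m` vanishes, so rescaling the
corresponding column of `A` does not change `A * m` and brings the determinant to `1`.
-/

open Matrix

/-- If `m` has a left inverse, every matrix of full column rank of the same shape is obtained from
`m` by left multiplication with an invertible matrix. -/
lemma exists_isUnit_mul_eq {p n : ℕ} {m x : Matrix (Fin p) (Fin n) ℂ} {y : Matrix (Fin n) (Fin p) ℂ}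
    (hy : y * m = 1) (hx : x.rank = n) :
    ∃ A : Matrix (Fin p) (Fin p) ℂ, IsUnit A.det ∧ A * m = x := by
  have hinj : Function.Injective x.mulVecLin := by
    rw [← LinearMap.ker_eq_bot, ← Submodule.finrank_eq_zero]
    have h := LinearMap.finrank_range_add_finrank_ker x.mulVecLin
    rw [Matrix.rank] at hx
    rw [Module.finrank_fin_fun] at h
    omega
  have hym : ∀ v, y *ᵥ (m *ᵥ v) = v := fun v => by simp [hy]
  let W := LinearMap.range m.mulVecLin
  let f : W →ₗ[ℂ] (Fin p → ℂ) := (x.mulVecLin ∘ₗ y.mulVecLin) ∘ₗ W.subtype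
  have hf : Function.Injective f := by
    rintro ⟨_, v, rfl⟩ ⟨_, w, rfl⟩ h
    have h' : x.mulVecLin v = x.mulVecLin w := by
      simpa only [f, LinearMap.comp_apply, Submodule.subtype_apply, mulVecLin_apply, hym] using h
    exact Subtype.ext (congrArg m.mulVecLin (hinj h'))
  obtain ⟨g, hg⟩ := Submodule.exists_linearEquiv_restrict_eq (LinearEquiv.ofInjective f hf)
  refine ⟨LinearMap.toMatrix' g.toLinearMap, ?_, ?_⟩
  · rw [LinearMap.det_toMatrix']
    exact g.isUnit_det'
  · apply Matrix.mulVec_injective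
    ext1 v
    have h : f ⟨m *ᵥ v, v, rfl⟩ = g (m *ᵥ v) := hg ⟨m *ᵥ v, v, rfl⟩
    simp only [f, LinearMap.comp_apply, Submodule.subtype_apply, mulVecLin_apply, hym] at h
    rw [← mulVec_mulVec, LinearMap.toMatrix'_mulVec]
    exact h.symm

lemma symplecticForm_mul_self {q : ℕ} {J : Matrix (Fin (2 * q)) (Fin (2 * q)) ℂ}
    (hJ : ∀ i j, J i j = if (i : ℕ) + q = (j : ℕ) then 1
      else if (j : ℕ) + q = (i : ℕ) then -1 else 0) : J * J = -1 := by
  ext i k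
  rw [mul_apply]
  -- `J` is monomial: the only nonzero entry of row `i` is in column `i ± q`.
  by_cases hi : (i : ℕ) < q
  · rw [Finset.sum_eq_single (⟨i + q, by omega⟩ : Fin (2 * q))]
    · simp only [hJ, Matrix.neg_apply, Matrix.one_apply, Fin.ext_iff]
      split_ifs <;> first | omega | simp
    · intro j _ hj
      rw [ne_eq, Fin.ext_iff] at hj
      simp only at hj
      rw [hJ i j, if_neg (by omega), if_neg (by omega), zero_mul]
    · simp
  · rw [Finset.sum_eq_single (⟨i - q, by omega⟩ : Fin (2 * q))]
    · simp only [hJ, Matrix.neg_apply, Matrix.one_apply, Fin.ext_iff]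
      split_ifs <;> first | omega | simp
    · intro j _ hj
      rw [ne_eq, Fin.ext_iff] at hj
      simp only at hj
      rw [hJ i j, if_neg (by omega), if_neg (by omega), zero_mul]
    · simp

/-- For `p > 2q`, the `SL(p,ℂ) × Sp(q,ℂ)`-orbit of the matrix `m = (I_{2q} ; 0)`
(identity on top, zeros below) under `z ↦ a z b` is exactly the set of `p × 2q`
complex matrices of rank `2q`, where `J = (0, I_q; -I_q, 0)`. -/
theorem stmt_10 (p q : ℕ) (hpq : 2 * q < p)
    (J : Matrix (Fin (2 * q)) (Fin (2 * q)) ℂ)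
    (hJ : ∀ i j, J i j = if (i : ℕ) + q = (j : ℕ) then 1
      else if (j : ℕ) + q = (i : ℕ) then -1 else 0)
    (m : Matrix (Fin p) (Fin (2 * q)) ℂ)
    (hm : ∀ i j, m i j = if (i : ℕ) = (j : ℕ) then 1 else 0) :
    {x : Matrix (Fin p) (Fin (2 * q)) ℂ |
        ∃ a : Matrix (Fin p) (Fin p) ℂ, ∃ b : Matrix (Fin (2 * q)) (Fin (2 * q)) ℂ,
          a.det = 1 ∧ b * J * bᵀ = J ∧ x = a * m * b} =
      {x : Matrix (Fin p) (Fin (2 * q)) ℂ | x.rank = 2 * q} := by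
  have hmm : mᵀ * m = 1 := by
    ext i k
    rw [mul_apply, Finset.sum_eq_single (⟨i, by omega⟩ : Fin p)]
    · simp [hm, one_apply, Fin.ext_iff]
    · intro j _ hj
      rw [ne_eq, Fin.ext_iff] at hj
      simp only at hj
      rw [transpose_apply, hm j i, if_neg hj, zero_mul]
    · simp
  have hmrank : m.rank = 2 * q := by
    refine le_antisymm (rank_le_width m) ?_
    have h := rank_mul_le_right mᵀ m
    rwa [hmm, rank_one, Fintype.card_fin] at h
  ext x
  simp only [Set.mem_ofPred_eq]
  constructor
  · rintro ⟨a, b, ha, hb, rfl⟩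
    have hbu : IsUnit b.det := by
      refine isUnit_det_of_right_inverse (B := J * bᵀ * -J) ?_
      rw [← Matrix.mul_assoc, ← Matrix.mul_assoc, hb, Matrix.mul_neg, symplecticForm_mul_self hJ,
        neg_neg]
    rw [rank_mul_eq_left_of_isUnit_det _ _ hbu,
      rank_mul_eq_right_of_isUnit_det _ _ (by rw [ha]; exact isUnit_one), hmrank]
  · intro hx
    obtain ⟨A, hA, rfl⟩ := exists_isUnit_mul_eq hmm hx
    -- `D` rescales only the coordinate `2q`, in which every column of `m` vanishes.
    let d : Fin p → ℂ := Function.update 1 ⟨2 * q, hpq⟩ A.det⁻¹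
    have hD : diagonal d * m = m := by
      ext i j
      rw [diagonal_mul]
      by_cases hi : i = ⟨2 * q, hpq⟩
      · have : (i : ℕ) ≠ j := by rw [hi]; have := j.2; simp only; omega
        rw [hm, if_neg this, mul_zero]
      · simp [d, hi]
    refine ⟨A * diagonal d, 1, ?_, by simp, ?_⟩
    · rw [det_mul, det_diagonal, Finset.prod_update_of_mem (Finset.mem_univ _)]
      simp [hA.ne_zero]
    · rw [Matrix.mul_one, Matrix.mul_assoc, hD]
end
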